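/- Let A ⊆ ℤ^d be a finite positively generating set with 0 ∈ A. For every face F of conv(A) there exists a unique A-horoball H ⊆ ℤ^d with 0 ∈ H and conv(H) = Env_F, and this horoball is H_F = Σ_{w ∈ Ext(F)} ⋃_{j≥0} j(A − w). Conversely, every A-horoball is of the form v + H_F for some v ∈ ℤ^d and some face F of conv(A), and the face F is uniquely determined. -/

import Mathlib

/-!
Write `M(S)` (`diffMonoid A S`) for the submonoid of `ℤ^d` generated by the differences `u - v`
with `u ∈ A`, `v ∈ S`, so that `H_F = M(Ext F)`.

*Limits of balls are translates of some `M(S)`.* If `h₀` lies in the horoball `H`, the centre of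
the `i`-th ball is `h₀ - ∑ a, c i a • a` with nonnegative integers `c i a` whose sum is the radius.
By Dickson's lemma one may pass to a subsequence along which every `c i a` is monotone in `i`.
If `S` is the set of those `a` with `c i a → ∞` (the others being eventually constant), the balls
exhaust a translate of `M(S)`: this is `horoball_eq_translate`. Conversely `M(S)` is the limit of
the balls `∑ a ∈ S, i (A - a)` (`diffMonoid_limit`), so every `H_F` is a horoball.

*`M(S)` depends only on the smallest face containing `S`.* An integral point of the real cone over
a submonoid has a positive multiple in the submonoid (Farkas over `ℚ`), hence an element `v` of the
cone with `-v` in the submonoid is itself in the submonoid (`mem_of_neg_mem`). Applied to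
differences of points on the smallest face `F` containing `S`, this gives `M(S) = H_F`, or
`M(S) = ℤ^d` if `F = conv(A)`; the latter is excluded for horoballs
(`diffMonoid_eq_univ_or_face`, `horoball_eq_face`).

*The face is determined by the cone.* If `v ∈ F`, `p ∈ conv(A)` and `v - p ∈ conv(H_F)`, then
`p ∈ F` by extremality (`mem_face_of_sub_mem`). Thus translates of `conv(H_F)` and `conv(H_F')`
coincide only if `F = F'` (`face_eq_of_translate`), which yields both uniqueness claims; for the
first one, `mem_of_neg_mem` also removes the remaining translation.

*`conv(H_F) = Env_F`* (`hullCone_eq_env`). A point outside the cone is separated from it by a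
functional (Farkas over `ℝ`), which can be tilted until its zeros among the generators span its
kernel (`exists_facet_functional`); it is then the inward normal of a facet containing `F`.
-/

open Filter Set
open scoped Pointwise

/-- `A ⊆ ℤ^d` is positively generating: every point is in some `n`-fold
Minkowski sum `nA`, `n ≥ 1`. -/
def PosGenZ {d : ℕ} (A : Set (Fin d → ℤ)) : Prop :=
  ∀ g : Fin d → ℤ, ∃ n : ℕ, 1 ≤ n ∧ g ∈ n • A

/-- The canonical embedding `ℤ^d → ℝ^d`. -/
def coeR {d : ℕ} : (Fin d → ℤ) → (Fin d → ℝ) := fun x i => (x i : ℝ)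

/-- Convergence of a sequence of subsets in the product topology on
`{0,1}^{ℤ^d}`: pointwise eventual agreement of membership. -/
def ConvergesTo {α : Type*} (s : ℕ → Set α) (S : Set α) : Prop :=
  ∀ a : α, ∀ᶠ i in atTop, (a ∈ s i ↔ a ∈ S)

/-- An `A`-horoball: a nonempty proper subset of `ℤ^d` that is a limit of
translated balls `g_i + n_i A` with radii `n_i → ∞`. -/
def IsHoroballZ {d : ℕ} (A H : Set (Fin d → ℤ)) : Prop :=
  H.Nonempty ∧ H ≠ univ ∧
    ∃ (g : ℕ → (Fin d → ℤ)) (n : ℕ → ℕ), Tendsto n atTop atTop ∧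
      ConvergesTo (fun i => (g i + ·) '' (n i • A)) H

/-- A (nonempty, proper) face of a convex set `P ⊆ ℝ^d`: a nonempty convex
extreme subset different from `P`. -/
def IsProperFace {d : ℕ} (P F : Set (Fin d → ℝ)) : Prop :=
  F.Nonempty ∧ F ≠ P ∧ Convex ℝ F ∧ IsExtreme ℝ P F

/-- The standard dot product on `ℝ^d`. -/
def dotp {d : ℕ} (ℓ x : Fin d → ℝ) : ℝ := ∑ i, ℓ i * x i

/-- A `(d-1)`-dimensional face of `P`. -/
def IsFacet {d : ℕ} (P F : Set (Fin d → ℝ)) : Prop :=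
  IsProperFace P F ∧ Module.finrank ℝ (vectorSpan ℝ F) = d - 1

/-- The envelope `Env_F` of `A` with respect to a face `F` of `P = conv(A)`:
the intersection of the half-spaces `{x : ⟨ℓ_{F'}, x⟩ ≥ 0}` over all
`(d-1)`-dimensional faces `F'` of `P` containing `F`, where `ℓ_{F'}` is the
inward normal of `F'` (characterized by being nonzero, orthogonal to
differences of points of `F'`, and pairing nonnegatively with `u - v` for
`u ∈ P`, `v ∈ F'`). -/
def EnvF {d : ℕ} (P F : Set (Fin d → ℝ)) : Set (Fin d → ℝ) :=
  {x | ∀ F' : Set (Fin d → ℝ), IsFacet P F' → F ⊆ F' →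
    ∀ ℓ : Fin d → ℝ, ℓ ≠ 0 →
      (∀ u ∈ F', ∀ v ∈ F', dotp ℓ (u - v) = 0) →
      (∀ u ∈ P, ∀ v ∈ F', 0 ≤ dotp ℓ (u - v)) →
      0 ≤ dotp ℓ x}

/-- The lattice points of `ℤ^d` that are extreme points of `F ⊆ ℝ^d`. -/
def ExtZ {d : ℕ} (F : Set (Fin d → ℝ)) : Set (Fin d → ℤ) :=
  coeR ⁻¹' (F.extremePoints ℝ)

/-- `H_F = Σ_{w ∈ Ext(F)} ⋃_{j ≥ 0} j(A - w)`: the additive subsemigroup of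
`ℤ^d` containing `0` generated by `{u - v : u ∈ A, v ∈ Ext(F)}`. -/
def HF {d : ℕ} (A : Set (Fin d → ℤ)) (F : Set (Fin d → ℝ)) :
    Set (Fin d → ℤ) :=
  (AddSubmonoid.closure {x : Fin d → ℤ | ∃ u ∈ A, ∃ v ∈ ExtZ F, x = u - v} :
    Set (Fin d → ℤ))

/-! ### Farkas' lemma and integral points of cones -/

/-- **Farkas' lemma** over an arbitrary ordered field, by induction on the number of generators:
a vector outside the cone spanned by finitely many vectors is separated from it. -/
lemma farkas {K V ι : Type*} [Field K] [LinearOrder K] [IsStrictOrderedRing K]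
    [AddCommGroup V] [Module K V] (s : Finset ι) :
    ∀ (f : ι → V) (x : V),
      (∃ c : ι → K, (∀ i, 0 ≤ c i) ∧ x = ∑ i ∈ s, c i • f i) ∨
      (∃ l : V →ₗ[K] K, (∀ i ∈ s, 0 ≤ l (f i)) ∧ l x < 0) := by
  classical
  induction s using Finset.induction_on with
  | empty =>
    intro f x
    by_cases hx : x = 0
    · exact Or.inl ⟨fun _ => 0, fun _ => le_rfl, by simpa using hx⟩
    · right
      obtain ⟨l, hl⟩ : ∃ l : V →ₗ[K] K, l x ≠ 0 := by
        by_contra! h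
        exact hx ((Module.forall_dual_apply_eq_zero_iff K x).1 h)
      rcases lt_or_gt_of_ne hl with h | h
      · exact ⟨l, by simp, h⟩
      · exact ⟨-l, by simp, by simpa using h⟩
  | insert a s ha ih =>
    intro f x
    rcases ih f x with ⟨c, hc, hx⟩ | ⟨l, hl, hlx⟩
    · left
      refine ⟨Function.update c a 0, ?_, ?_⟩
      · intro i
        by_cases h : i = a
        · subst h; simp
        · simpa [h] using hc i
      · rw [Finset.sum_insert ha, hx]
        simp only [Function.update_self, zero_smul, zero_add]
        refine Finset.sum_congr rfl fun i hi => ?_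
        rw [Function.update_of_ne (by rintro rfl; exact ha hi)]
    · rcases le_or_gt 0 (l (f a)) with hla | hla
      · right
        refine ⟨l, ?_, hlx⟩
        intro i hi
        rcases Finset.mem_insert.1 hi with rfl | hi
        · exact hla
        · exact hl i hi
      -- project along `f a` onto the kernel of `l` and use the induction hypothesis there
      · have hne := hla.ne
        let π : V →ₗ[K] V := LinearMap.id - (l.smulRight ((l (f a))⁻¹ • f a))
        have hπ : ∀ y, π y = y - (l y * (l (f a))⁻¹) • f a := by
          intro y; simp [π, smul_smul]
        rcases ih (fun i => π (f i)) (π x) with ⟨c, hc, hx⟩ | ⟨l', hl', hlx'⟩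
        · left
          refine ⟨Function.update c a (l x * (l (f a))⁻¹ -
            ∑ i ∈ s, c i * (l (f i) * (l (f a))⁻¹)), ?_, ?_⟩
          · intro i
            by_cases h : i = a
            · subst h
              rw [Function.update_self]
              have h1 : 0 ≤ l x * (l (f i))⁻¹ :=
                mul_nonneg_of_nonpos_of_nonpos hlx.le (inv_nonpos.2 hla.le)
              have h2 : ∑ j ∈ s, c j * (l (f j) * (l (f i))⁻¹) ≤ 0 :=
                Finset.sum_nonpos fun j hj => mul_nonpos_of_nonneg_of_nonpos (hc j)
                  (mul_nonpos_of_nonneg_of_nonpos (hl j hj) (inv_nonpos.2 hla.le))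
              linarith
            · simpa [h] using hc i
          · rw [Finset.sum_insert ha, Function.update_self]
            have h3 : ∑ i ∈ s, Function.update c a (l x * (l (f a))⁻¹ -
                ∑ i ∈ s, c i * (l (f i) * (l (f a))⁻¹)) i • f i = ∑ i ∈ s, c i • f i := by
              refine Finset.sum_congr rfl fun i hi => ?_
              rw [Function.update_of_ne (by rintro rfl; exact ha hi)]
            rw [h3]
            have h4 : π x = ∑ i ∈ s, c i • f i -
                (∑ i ∈ s, c i * (l (f i) * (l (f a))⁻¹)) • f a := by
              rw [hx, Finset.sum_smul, ← Finset.sum_sub_distrib]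
              refine Finset.sum_congr rfl fun i _ => ?_
              rw [hπ, smul_sub, smul_smul]
            rw [hπ] at h4
            refine (sub_eq_iff_eq_add.1 h4).trans ?_
            rw [sub_smul]
            abel
        · right
          refine ⟨l'.comp π, ?_, hlx'⟩
          intro i hi
          rcases Finset.mem_insert.1 hi with rfl | hi
          · have : π (f i) = 0 := by rw [hπ, mul_inv_cancel₀ hne, one_smul, sub_self]
            simp [this]
          · exact hl' i hi

/-- The embedding `coeR` as an additive homomorphism. -/
def coeRHom (d : ℕ) : (Fin d → ℤ) →+ (Fin d → ℝ) where
  toFun := coeR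
  map_zero' := by ext; simp [coeR]
  map_add' := by intros; ext; simp [coeR]

lemma coeR_add {d : ℕ} (x y : Fin d → ℤ) : coeR (x + y) = coeR x + coeR y :=
  (coeRHom d).map_add x y

lemma coeR_sub {d : ℕ} (x y : Fin d → ℤ) : coeR (x - y) = coeR x - coeR y :=
  (coeRHom d).map_sub x y

lemma coeR_neg {d : ℕ} (x : Fin d → ℤ) : coeR (-x) = -coeR x :=
  (coeRHom d).map_neg x

lemma coeR_zero {d : ℕ} : coeR (0 : Fin d → ℤ) = 0 := (coeRHom d).map_zero

lemma coeR_injective {d : ℕ} : Function.Injective (coeR : (Fin d → ℤ) → (Fin d → ℝ)) := by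
  intro x y h
  ext i
  have := congrFun h i
  simpa [coeR] using this

/-- The real convex hull of a submonoid of `ℤ^d`; it is a convex cone. -/
def hullCone {d : ℕ} (M : AddSubmonoid (Fin d → ℤ)) : Set (Fin d → ℝ) :=
  convexHull ℝ (coeR '' (M : Set (Fin d → ℤ)))

section HullCone

variable {d : ℕ} {M : AddSubmonoid (Fin d → ℤ)}

lemma coeR_mem_hullCone {m : Fin d → ℤ} (hm : m ∈ M) : coeR m ∈ hullCone M :=
  subset_convexHull ℝ _ ⟨m, hm, rfl⟩

lemma hullCone_zero : (0 : Fin d → ℝ) ∈ hullCone M := by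
  have := coeR_mem_hullCone M.zero_mem
  rwa [coeR_zero] at this

lemma hullCone_add {x y : Fin d → ℝ} (hx : x ∈ hullCone M) (hy : y ∈ hullCone M) :
    x + y ∈ hullCone M := by
  have h : x + y ∈ hullCone M + hullCone M := Set.add_mem_add hx hy
  unfold hullCone at h
  rw [← convexHull_add] at h
  refine convexHull_mono ?_ h
  rintro _ ⟨_, ⟨a, ha, rfl⟩, _, ⟨b, hb, rfl⟩, rfl⟩
  exact ⟨a + b, M.add_mem ha hb, coeR_add a b⟩

lemma hullCone_nsmul {x : Fin d → ℝ} (hx : x ∈ hullCone M) (n : ℕ) :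
    n • x ∈ hullCone M := by
  induction n with
  | zero => simpa using hullCone_zero
  | succ n ih => rw [succ_nsmul]; exact hullCone_add ih hx

lemma hullCone_smul {x : Fin d → ℝ} (hx : x ∈ hullCone M) {t : ℝ} (ht : 0 ≤ t) :
    t • x ∈ hullCone M := by
  obtain ⟨n, hn⟩ := exists_nat_gt t
  have hn0 : (0 : ℝ) < n := ht.trans_lt hn
  have h := (convex_convexHull ℝ (coeR '' (M : Set (Fin d → ℤ)))).smul_mem_of_zero_mem
    hullCone_zero (hullCone_nsmul hx n) (t := t / n)
    ⟨by positivity, (div_le_one hn0).2 hn.le⟩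
  have h2 : (t / n) • (n • x) = t • x := by
    rw [← Nat.cast_smul_eq_nsmul ℝ, smul_smul, div_mul_cancel₀ _ hn0.ne']
  rwa [h2] at h

lemma hullCone_sum {ι : Type*} (s : Finset ι) {f : ι → Fin d → ℝ}
    (hf : ∀ i ∈ s, f i ∈ hullCone M) : ∑ i ∈ s, f i ∈ hullCone M :=
  Finset.sum_induction f (· ∈ hullCone M) (fun _ _ => hullCone_add) hullCone_zero hf

/-- An integral point of the real cone over `M` has a positive multiple in `M`: by Farkas' lemma
over `ℚ` it already lies in the rational cone, since a rational separating functional would also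
separate over `ℝ`. -/
lemma exists_nsmul_mem {v : Fin d → ℤ} (hv : coeR v ∈ hullCone M) :
    ∃ N : ℕ, 1 ≤ N ∧ N • v ∈ M := by
  obtain ⟨ι, hι, w, z, hw0, hw1, hz, hsum⟩ := mem_convexHull_iff_exists_fintype.1 hv
  choose h hhM hh using hz
  rcases farkas (K := ℚ) (Finset.univ : Finset ι) (fun i => fun j => ((h i j : ℤ) : ℚ))
    (fun j => ((v j : ℤ) : ℚ)) with ⟨c, hc, hx⟩ | ⟨l, hl, hlx⟩
  · let Q : (Fin d → ℚ) → Prop := fun q =>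
      ∃ N : ℕ, 1 ≤ N ∧ ∃ m ∈ M, ∀ j, (N : ℚ) * q j = ((m j : ℤ) : ℚ)
    have hQ : Q (∑ i, c i • fun j => ((h i j : ℤ) : ℚ)) := by
      refine Finset.sum_induction _ Q ?_ ?_ ?_
      · rintro a b ⟨N, hN, m, hm, ham⟩ ⟨N', hN', m', hm', hbm⟩
        refine ⟨N * N', Nat.mul_pos hN hN', N' • m + N • m',
          M.add_mem (M.nsmul_mem hm _) (M.nsmul_mem hm' _), fun j => ?_⟩
        rw [Pi.add_apply, Pi.add_apply, Pi.smul_apply, Pi.smul_apply, nsmul_eq_mul, nsmul_eq_mul]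
        push_cast
        rw [← ham j, ← hbm j]
        ring
      · exact ⟨1, le_rfl, 0, M.zero_mem, by simp⟩
      · intro i _
        refine ⟨(c i).den, (c i).den_pos, (c i).num.toNat • h i, M.nsmul_mem (hhM i) _,
          fun j => ?_⟩
        have hnum : (((c i).num.toNat : ℤ)) = (c i).num :=
          Int.toNat_of_nonneg (Rat.num_nonneg.2 (hc i))
        have hnum' : (((c i).num.toNat : ℕ) : ℚ) = ((c i).num : ℚ) := by exact_mod_cast hnum
        rw [Pi.smul_apply, Pi.smul_apply, nsmul_eq_mul, smul_eq_mul]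
        push_cast
        rw [hnum', ← mul_assoc, mul_comm ((c i).den : ℚ), Rat.mul_den_eq_num]
    rw [← hx] at hQ
    obtain ⟨N, hN, m, hm, h⟩ := hQ
    refine ⟨N, hN, ?_⟩
    convert hm using 1
    ext j
    have h' : (N : ℚ) * ((v j : ℤ) : ℚ) = ((m j : ℤ) : ℚ) := h j
    rw [Pi.smul_apply, nsmul_eq_mul]
    exact_mod_cast h'
  · exfalso
    set y : Fin d → ℚ := fun j => l (fun k => if j = k then 1 else 0)
    have hly : ∀ z : Fin d → ℚ, l z = ∑ j, z j * y j := by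
      intro z
      rw [LinearMap.pi_apply_eq_sum_univ l z]
      rfl
    have h1 : ∀ i, (0 : ℝ) ≤ ∑ j, (h i j : ℝ) * (y j : ℝ) := by
      intro i
      have := hl i (Finset.mem_univ i)
      rw [hly] at this
      exact_mod_cast this
    have h2 : ∑ j, (v j : ℝ) * (y j : ℝ) < 0 := by
      rw [hly] at hlx
      exact_mod_cast hlx
    have h3 : ∑ j, (v j : ℝ) * (y j : ℝ) = ∑ i, w i * ∑ j, (h i j : ℝ) * (y j : ℝ) := by
      simp_rw [Finset.mul_sum]
      rw [Finset.sum_comm]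
      refine Finset.sum_congr rfl fun j _ => ?_
      have := congrFun hsum j
      simp only [Finset.sum_apply, Pi.smul_apply, smul_eq_mul, ← hh] at this
      have h4 : (v j : ℝ) = ∑ i, w i * (h i j : ℝ) := this.symm
      rw [h4, Finset.sum_mul]
      exact Finset.sum_congr rfl fun i _ => by ring
    rw [h3] at h2
    exact absurd h2 (not_lt.2 (Finset.sum_nonneg fun i _ => mul_nonneg (hw0 i) (h1 i)))

/-- If `-v ∈ M` and `v` lies in the real cone over `M`, then `v ∈ M`:
write `v = N v + (N - 1)(-v)` with `N v ∈ M`. -/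
lemma mem_of_neg_mem {v : Fin d → ℤ} (hv : coeR v ∈ hullCone M) (hn : -v ∈ M) : v ∈ M := by
  obtain ⟨N, hN, h⟩ := exists_nsmul_mem hv
  obtain ⟨k, rfl⟩ := Nat.exists_eq_add_of_le' hN
  have h1 := M.add_mem h (M.nsmul_mem hn k)
  have h2 : (k + 1) • v + k • (-v) = v := by
    rw [succ_nsmul, smul_neg]; abel
  rwa [h2] at h1

end HullCone

/-! ### Faces of the polytope and the monoids generated by differences -/

/-- The submonoid of `ℤ^d` generated by the differences `u - v` with `u ∈ A` and `v ∈ S`. -/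
def diffMonoid {d : ℕ} (A S : Set (Fin d → ℤ)) : AddSubmonoid (Fin d → ℤ) :=
  AddSubmonoid.closure {x : Fin d → ℤ | ∃ u ∈ A, ∃ v ∈ S, x = u - v}

lemma HF_eq {d : ℕ} (A : Set (Fin d → ℤ)) (F : Set (Fin d → ℝ)) :
    HF A F = (diffMonoid A (ExtZ F) : Set (Fin d → ℤ)) := rfl

lemma sub_mem_diffMonoid {d : ℕ} {A S : Set (Fin d → ℤ)} {u v : Fin d → ℤ}
    (hu : u ∈ A) (hv : v ∈ S) : u - v ∈ diffMonoid A S :=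
  AddSubmonoid.subset_closure ⟨u, hu, v, hv, rfl⟩

lemma diffMonoid_le {d : ℕ} {A S : Set (Fin d → ℤ)} {N : AddSubmonoid (Fin d → ℤ)}
    (h : ∀ u ∈ A, ∀ v ∈ S, u - v ∈ N) : diffMonoid A S ≤ N := by
  refine AddSubmonoid.closure_le.2 ?_
  rintro _ ⟨u, hu, v, hv, rfl⟩
  exact h u hu v hv

lemma diffMonoid_mono {d : ℕ} {A S T : Set (Fin d → ℤ)} (h : S ⊆ T) :
    diffMonoid A S ≤ diffMonoid A T :=
  diffMonoid_le fun _ hu _ hv => sub_mem_diffMonoid hu (h hv)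

/-- A point with positive weight in a convex combination that lands in a face lies in the face. -/
lemma mem_face_of_sum_mem {E ι : Type*} [AddCommGroup E] [Module ℝ E] {P F : Set E}
    (hP : Convex ℝ P) (hF : IsExtreme ℝ P F) (s : Finset ι) (w : ι → ℝ) (z : ι → E)
    (hw0 : ∀ i ∈ s, 0 ≤ w i) (hw1 : ∑ i ∈ s, w i = 1) (hz : ∀ i ∈ s, z i ∈ P)
    (hsum : ∑ i ∈ s, w i • z i ∈ F) {j : ι} (hj : j ∈ s) (hwj : 0 < w j) : z j ∈ F := by
  classical
  have hs := Finset.add_sum_erase s w hj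
  have hs' := Finset.add_sum_erase s (fun i => w i • z i) hj
  have he : ∀ i ∈ s.erase j, 0 ≤ w i := fun i hi => hw0 i (Finset.mem_of_mem_erase hi)
  rcases (Finset.sum_nonneg he).eq_or_lt with h | h
  · have h0 := (Finset.sum_eq_zero_iff_of_nonneg he).1 h.symm
    have h1 : ∑ i ∈ s.erase j, w i • z i = 0 :=
      Finset.sum_eq_zero fun i hi => by rw [h0 i hi, zero_smul]
    have hwj1 : w j = 1 := by linarith
    simp only [h1, hwj1, one_smul, add_zero] at hs'
    rwa [← hs'] at hsum
  · have hy : (s.erase j).centerMass w z ∈ P :=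
      hP.centerMass_mem he h fun i hi => hz i (Finset.mem_of_mem_erase hi)
    refine hF.left_mem_of_mem_openSegment (hz j hj) hy hsum
      ⟨w j, ∑ i ∈ s.erase j, w i, hwj, h, by rw [hs, hw1], ?_⟩
    rw [Finset.centerMass, smul_smul, mul_inv_cancel₀ h.ne', one_smul]
    exact hs'

section Faces

variable {d : ℕ} {A : Set (Fin d → ℤ)} {F : Set (Fin d → ℝ)}

/-- The points of `A` on the face `F`. -/
def facePts (A : Set (Fin d → ℤ)) (F : Set (Fin d → ℝ)) : Set (Fin d → ℤ) :=
  {a ∈ A | coeR a ∈ F}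

lemma face_eq_hull_facePts (hc : Convex ℝ F) (hF : IsExtreme ℝ (convexHull ℝ (coeR '' A)) F) :
    F = convexHull ℝ (coeR '' facePts A F) := by
  classical
  apply Set.Subset.antisymm
  · intro p hp
    obtain ⟨ι, hι, w, z, hw0, hw1, hz, hsum⟩ := mem_convexHull_iff_exists_fintype.1 (hF.subset hp)
    have hpos : ∀ i, w i ≠ 0 → 0 < w i := fun i hi => (hw0 i).lt_of_ne' hi
    rw [← hsum] at hp ⊢
    rw [← Finset.sum_filter_of_ne (p := fun i => w i ≠ 0)
      (fun i _ h hi => h (by rw [hi, zero_smul]))]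
    refine (convex_convexHull ℝ (coeR '' facePts A F)).sum_mem (fun i _ => hw0 i)
      (by rw [Finset.sum_filter_ne_zero, hw1]) fun i hi => subset_convexHull ℝ _ ?_
    obtain ⟨a, ha, hai⟩ := hz i
    refine ⟨a, ⟨ha, ?_⟩, hai⟩
    rw [hai]
    exact mem_face_of_sum_mem (convex_convexHull ℝ _) hF Finset.univ w z (fun i _ => hw0 i) hw1
      (fun i _ => subset_convexHull ℝ _ (hz i)) hp (Finset.mem_univ i)
      (hpos i (Finset.mem_filter.1 hi).2)
  · refine convexHull_min ?_ hc
    rintro _ ⟨a, ha, rfl⟩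
    exact ha.2

lemma extZ_subset (hc : Convex ℝ F) (hF : IsExtreme ℝ (convexHull ℝ (coeR '' A)) F) :
    ExtZ F ⊆ facePts A F := by
  intro a ha
  have h1 : coeR a ∈ (convexHull ℝ (coeR '' facePts A F)).extremePoints ℝ := by
    rw [← face_eq_hull_facePts hc hF]; exact ha
  obtain ⟨b, hb, hba⟩ := extremePoints_convexHull_subset h1
  rwa [← coeR_injective hba]

/-- Minkowski's theorem for a face, from Krein–Milman and the finiteness of `A`. -/
lemma face_eq_hull_ext (hfin : A.Finite) (hc : Convex ℝ F)
    (hF : IsExtreme ℝ (convexHull ℝ (coeR '' A)) F) :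
    F = convexHull ℝ (coeR '' ExtZ F) := by
  have hfinF : (coeR '' facePts A F).Finite := (hfin.subset fun _ h => h.1).image _
  have heq := face_eq_hull_facePts hc hF
  have hcomp : IsCompact F := by
    rw [heq]; exact hfinF.isCompact_convexHull ℝ
  have himg : coeR '' ExtZ F = F.extremePoints ℝ := by
    apply Set.Subset.antisymm
    · rintro _ ⟨a, ha, rfl⟩; exact ha
    · intro p hp
      have h1 : p ∈ (convexHull ℝ (coeR '' facePts A F)).extremePoints ℝ := by
        rw [← heq]; exact hp
      obtain ⟨b, hb, rfl⟩ := extremePoints_convexHull_subset h1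
      exact ⟨b, hp, rfl⟩
  have hfinE : (coeR '' ExtZ F).Finite :=
    hfinF.subset (Set.image_mono (extZ_subset hc hF))
  have := closure_convexHull_extremePoints hcomp hc
  rw [← himg, (hfinE.isClosed_convexHull ℝ).closure_eq] at this
  exact this.symm

lemma sub_mem_hullCone {S : Set (Fin d → ℤ)} {p s : Fin d → ℝ}
    (hp : p ∈ convexHull ℝ (coeR '' A)) (hs : s ∈ convexHull ℝ (coeR '' S)) :
    p - s ∈ hullCone (diffMonoid A S) := by
  have h := Set.sub_mem_sub hp hs
  rw [← convexHull_sub] at h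
  refine convexHull_mono ?_ h
  rintro _ ⟨_, ⟨a, ha, rfl⟩, _, ⟨b, hb, rfl⟩, rfl⟩
  exact ⟨a - b, sub_mem_diffMonoid ha hb, coeR_sub a b⟩

/-- If some point of `conv S` lies strictly between `w ∈ A` and a point of `conv A`, then
`-w` may be used in `diffMonoid A S` as if `w` belonged to `S`. -/
lemma sub_mem_of_openSegment {S : Set (Fin d → ℤ)} (hSA : S ⊆ A) {w : Fin d → ℤ} (hw : w ∈ A)
    {s y : Fin d → ℝ} (hs : s ∈ convexHull ℝ (coeR '' S))
    (hy : y ∈ convexHull ℝ (coeR '' A)) (hsy : s ∈ openSegment ℝ (coeR w) y)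
    {u : Fin d → ℤ} (hu : u ∈ A) : u - w ∈ diffMonoid A S := by
  obtain ⟨t, r, ht, hr, htr, hst⟩ := hsy
  obtain ⟨_, a, ha, rfl⟩ := convexHull_nonempty_iff.1 ⟨s, hs⟩
  have h1 : s - coeR w ∈ hullCone (diffMonoid A S) := by
    have h := hullCone_smul (sub_mem_hullCone hy hs) (t := r / t) (by positivity)
    have h2 : (r / t) • (y - s) = s - coeR w := by
      have hr' : r = 1 - t := by linarith
      have h3 : t • ((r / t) • (y - s)) = t • (s - coeR w) := by
        rw [smul_smul, mul_div_cancel₀ _ ht.ne', smul_sub,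
          eq_sub_iff_add_eq'.2 hst, hr']
        module
      exact smul_right_injective _ ht.ne' h3
    rwa [h2] at h
  have h2 : coeR (a - w) ∈ hullCone (diffMonoid A S) := by
    have h := hullCone_add (sub_mem_hullCone (subset_convexHull ℝ _ ⟨a, hSA ha, rfl⟩) hs) h1
    rwa [sub_add_sub_cancel, ← coeR_sub] at h
  have h3 : a - w ∈ diffMonoid A S := by
    refine mem_of_neg_mem h2 ?_
    rw [neg_sub]
    exact sub_mem_diffMonoid hw ha
  have h4 := (diffMonoid A S).add_mem (sub_mem_diffMonoid hu ha) h3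
  rwa [sub_add_sub_cancel] at h4

lemma diffMonoid_ext (hfin : A.Finite) (hc : Convex ℝ F)
    (hF : IsExtreme ℝ (convexHull ℝ (coeR '' A)) F) :
    diffMonoid A (ExtZ F) = diffMonoid A (facePts A F) := by
  have hsub := extZ_subset hc hF
  refine le_antisymm (diffMonoid_mono hsub) (diffMonoid_le fun u hu w hw => ?_)
  have hwF : coeR w ∈ convexHull ℝ (coeR '' ExtZ F) := by
    rw [← face_eq_hull_ext hfin hc hF]; exact hw.2
  refine sub_mem_of_openSegment (fun _ h => (hsub h).1) hw.1 hwF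
    (subset_convexHull ℝ _ ⟨w, hw.1, rfl⟩) ?_ hu
  rw [openSegment_same]; rfl

/-- The smallest face of `P` containing the point `s`. -/
def minFace (P : Set (Fin d → ℝ)) (s : Fin d → ℝ) : Set (Fin d → ℝ) :=
  {p ∈ P | ∃ y ∈ P, s ∈ openSegment ℝ p y}

lemma minFace_isExtreme {P : Set (Fin d → ℝ)} (hP : Convex ℝ P) (s : Fin d → ℝ) :
    IsExtreme ℝ P (minFace P s) := by
  refine ⟨fun _ h => h.1, ?_⟩
  rintro p₁ hp₁ p₂ hp₂ p ⟨-, y, hy, t, r, ht, hr, htr, hs⟩ ⟨α, β, hα, hβ, hαβ, rfl⟩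
  have hpos : 0 < t * β + r := by positivity
  have hsum : t * β / (t * β + r) + r / (t * β + r) = 1 := by field_simp
  refine ⟨hp₁, (t * β / (t * β + r)) • p₂ + (r / (t * β + r)) • y,
    hP hp₂ hy (by positivity) (by positivity) hsum, t * α, t * β + r, by positivity, hpos, ?_, ?_⟩
  · rw [← add_assoc, ← mul_add, hαβ, mul_one, htr]
  · rw [← hs, smul_add, smul_smul, smul_smul, mul_div_cancel₀ _ hpos.ne',
      mul_div_cancel₀ _ hpos.ne', smul_add, smul_smul, smul_smul, add_assoc]

lemma minFace_convex {P : Set (Fin d → ℝ)} (hP : Convex ℝ P) (s : Fin d → ℝ) :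
    Convex ℝ (minFace P s) := by
  rintro p₁ ⟨hp₁, y₁, hy₁, t₁, r₁, ht₁, hr₁, h₁, hs₁⟩ p₂ ⟨hp₂, y₂, hy₂, t₂, r₂, ht₂, hr₂, h₂, hs₂⟩
    α β hα hβ hαβ
  refine ⟨hP hp₁ hp₂ hα hβ hαβ, ?_⟩
  -- `s = t (α p₁ + β p₂) + r y`, where `1 / t = α / t₁ + β / t₂`
  set D := α * t₂ + β * t₁ with hD
  set R := α * t₂ * r₁ + β * t₁ * r₂ with hR
  have hDpos : 0 < D := by
    rcases hα.eq_or_lt with h | h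
    · have : β = 1 := by linarith
      rw [hD, ← h, this]; simpa using ht₁
    · have := mul_pos h ht₂
      have := mul_nonneg hβ ht₁.le
      linarith
  have hRpos : 0 < R := by
    rcases hα.eq_or_lt with h | h
    · have : β = 1 := by linarith
      rw [hR, ← h, this]; simpa using mul_pos ht₁ hr₂
    · have := mul_pos (mul_pos h ht₂) hr₁
      have := mul_nonneg (mul_nonneg hβ ht₁.le) hr₂.le
      linarith
  refine ⟨(α * t₂ * r₁ / R) • y₁ + (β * t₁ * r₂ / R) • y₂,
    hP hy₁ hy₂ (by positivity) (by positivity) (by rw [← add_div, ← hR, div_self hRpos.ne']),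
    t₁ * t₂ / D, R / D, by positivity, by positivity, ?_, ?_⟩
  · rw [← add_div, div_eq_one_iff_eq hDpos.ne', hD, hR]
    have e1 : r₁ = 1 - t₁ := by linarith
    have e2 : r₂ = 1 - t₂ := by linarith
    have e3 : β = 1 - α := by linarith
    rw [e1, e2, e3]; ring
  · have hDs : D • s = (α * t₂) • s + (β * t₁) • s := by rw [← add_smul]
    have key : D • ((t₁ * t₂ / D) • (α • p₁ + β • p₂) +
        (R / D) • ((α * t₂ * r₁ / R) • y₁ + (β * t₁ * r₂ / R) • y₂)) = D • s := by
      rw [hDs]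
      nth_rewrite 1 [← hs₁]
      rw [← hs₂]
      simp only [smul_add, smul_smul]
      have a1 : D * (t₁ * t₂ / D * α) = α * t₂ * t₁ := by field_simp
      have a2 : D * (t₁ * t₂ / D * β) = β * t₁ * t₂ := by field_simp
      have a3 : D * (R / D * (α * t₂ * r₁ / R)) = α * t₂ * r₁ := by field_simp
      have a4 : D * (R / D * (β * t₁ * r₂ / R)) = β * t₁ * r₂ := by field_simp
      rw [a1, a2, a3, a4]
      abel
    exact smul_right_injective _ hDpos.ne' key

/-- For nonempty `S ⊆ A`, the monoid `diffMonoid A S` only depends on the smallest face containing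
`S`; it is everything when that face is `conv A` itself. -/
lemma diffMonoid_eq_univ_or_face (hfin : A.Finite) (h0 : (0 : Fin d → ℤ) ∈ A) (hgen : PosGenZ A)
    {S : Set (Fin d → ℤ)} (hSA : S ⊆ A) (hS : S.Nonempty) :
    (diffMonoid A S : Set (Fin d → ℤ)) = univ ∨
    ∃ F, IsProperFace (convexHull ℝ (coeR '' A)) F ∧
      (diffMonoid A S : Set (Fin d → ℤ)) = HF A F := by
  classical
  set P := convexHull ℝ (coeR '' A) with hPdef
  have hP : Convex ℝ P := convex_convexHull ℝ _
  have hSfin := hfin.subset hSA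
  set T := hSfin.toFinset with hT
  have hTne : T.Nonempty := by simpa [hT] using hS
  have hTpos : (0 : ℝ) < T.card := by exact_mod_cast hTne.card_pos
  set s : Fin d → ℝ := ∑ a ∈ T, (1 / (T.card : ℝ)) • coeR a with hs
  have hw1 : ∑ a ∈ T, (1 / (T.card : ℝ)) = 1 := by
    rw [Finset.sum_const, nsmul_eq_mul, mul_one_div_cancel hTpos.ne']
  have hsS : s ∈ convexHull ℝ (coeR '' S) :=
    (convex_convexHull ℝ _).sum_mem (fun _ _ => by positivity) hw1 fun a ha =>
      subset_convexHull ℝ _ ⟨a, hSfin.mem_toFinset.1 ha, rfl⟩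
  have hsP : s ∈ P := convexHull_mono (Set.image_mono hSA) hsS
  set F := minFace P s with hFdef
  have hFe : IsExtreme ℝ P F := minFace_isExtreme hP s
  have hFc : Convex ℝ F := minFace_convex hP s
  have hsF : s ∈ F := ⟨hsP, s, hsP, by rw [openSegment_same]; rfl⟩
  have hSF : S ⊆ facePts A F := fun a ha =>
    ⟨hSA ha, mem_face_of_sum_mem hP hFe T (fun _ => 1 / (T.card : ℝ)) coeR
      (fun _ _ => by positivity) hw1
      (fun b hb => subset_convexHull ℝ _ ⟨b, hSA (hSfin.mem_toFinset.1 hb), rfl⟩) hsF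
      (hSfin.mem_toFinset.2 ha) (by positivity)⟩
  have hM : diffMonoid A S = diffMonoid A (facePts A F) := by
    refine le_antisymm (diffMonoid_mono hSF) (diffMonoid_le fun u hu w hw => ?_)
    obtain ⟨-, y, hy, hsy⟩ := hw.2
    exact sub_mem_of_openSegment hSA hw.1 hsS hy hsy hu
  by_cases hFP : F = P
  · left
    have hA : ∀ a ∈ A, a ∈ diffMonoid A S := by
      intro a ha
      have := sub_mem_diffMonoid (S := facePts A F) ha
        (v := 0) ⟨h0, by rw [hFP]; exact subset_convexHull ℝ _ ⟨0, h0, rfl⟩⟩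
      rwa [sub_zero, ← hM] at this
    have hn : ∀ n : ℕ, ∀ x ∈ n • A, x ∈ diffMonoid A S := by
      intro n
      induction n with
      | zero => intro x hx; rw [zero_nsmul] at hx; rw [Set.mem_zero.1 hx]; exact zero_mem _
      | succ n ih =>
        intro x hx
        rw [succ_nsmul] at hx
        obtain ⟨y, hy, a, ha, rfl⟩ := hx
        exact add_mem (ih y hy) (hA a ha)
    refine Set.eq_univ_of_forall fun g => ?_
    obtain ⟨n, -, hg⟩ := hgen g
    exact hn n g hg
  · right
    refine ⟨F, ⟨⟨s, hsF⟩, hFP, hFc, hFe⟩, ?_⟩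
    rw [HF_eq, diffMonoid_ext hfin hFc hFe, hM]

/-- Elements of the cone of a face are nonnegative multiples of vectors from the face into the
polytope. -/
lemma exists_of_mem_hullCone (hne : F.Nonempty) (hc : Convex ℝ F)
    (hF : IsExtreme ℝ (convexHull ℝ (coeR '' A)) F)
    {z : Fin d → ℝ} (hz : z ∈ hullCone (diffMonoid A (ExtZ F))) :
    ∃ r : ℝ, 0 ≤ r ∧ ∃ u ∈ convexHull ℝ (coeR '' A), ∃ w ∈ F, z = r • (u - w) := by
  set P := convexHull ℝ (coeR '' A) with hPdef
  have hP : Convex ℝ P := convex_convexHull ℝ _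
  let D : (Fin d → ℝ) → Prop := fun z => ∃ r : ℝ, 0 ≤ r ∧ ∃ u ∈ P, ∃ w ∈ F, z = r • (u - w)
  have hadd : ∀ x y, D x → D y → D (x + y) := by
    rintro _ _ ⟨r, hr, u, hu, w, hw, rfl⟩ ⟨r', hr', u', hu', w', hw', rfl⟩
    rcases (add_nonneg hr hr').eq_or_lt with h | h
    · have e1 : r = 0 := by linarith
      have e2 : r' = 0 := by linarith
      exact ⟨0, le_rfl, u, hu, w, hw, by simp [e1, e2]⟩
    · have hs : r / (r + r') + r' / (r + r') = 1 := by field_simp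
      refine ⟨r + r', h.le, _, hP hu hu' (by positivity) (by positivity) hs, _,
        hc hw hw' (by positivity) (by positivity) hs, ?_⟩
      simp only [smul_sub, smul_add, smul_smul]
      rw [mul_div_cancel₀ _ h.ne', mul_div_cancel₀ _ h.ne']
      abel
  have hsmul : ∀ t : ℝ, 0 ≤ t → ∀ x, D x → D (t • x) := by
    rintro t ht _ ⟨r, hr, u, hu, w, hw, rfl⟩
    exact ⟨t * r, mul_nonneg ht hr, u, hu, w, hw, by rw [smul_smul]⟩
  have hzero : D 0 := by
    obtain ⟨w, hw⟩ := hne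
    exact ⟨0, le_rfl, w, hF.subset hw, w, hw, by simp⟩
  have hDc : Convex ℝ {z | D z} := fun x hx y hy a b ha hb _ =>
    hadd _ _ (hsmul a ha x hx) (hsmul b hb y hy)
  refine convexHull_min ?_ hDc hz
  rintro _ ⟨m, hm, rfl⟩
  change D (coeR m)
  induction hm using AddSubmonoid.closure_induction with
  | mem x hx =>
    obtain ⟨u, hu, v, hv, rfl⟩ := hx
    exact ⟨1, zero_le_one, _, subset_convexHull ℝ _ ⟨u, hu, rfl⟩, _, hv.1,
      by rw [one_smul, coeR_sub]⟩
  | zero => rwa [coeR_zero]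
  | add x y _ _ hx hy => rw [coeR_add]; exact hadd _ _ hx hy

/-- The cone of a face detects the face: only points of `F` can be subtracted from points of `F`
without leaving the cone. -/
lemma mem_face_of_sub_mem (hne : F.Nonempty) (hc : Convex ℝ F)
    (hF : IsExtreme ℝ (convexHull ℝ (coeR '' A)) F) {v p : Fin d → ℝ} (hv : v ∈ F)
    (hp : p ∈ convexHull ℝ (coeR '' A)) (h : v - p ∈ hullCone (diffMonoid A (ExtZ F))) :
    p ∈ F := by
  obtain ⟨r, hr, u, hu, w, hw, he⟩ := exists_of_mem_hullCone hne hc hF h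
  rcases hr.eq_or_lt with h0 | h0
  · rw [← h0, zero_smul, sub_eq_zero] at he
    rwa [← he]
  · have hpos : 0 < 1 + r := by linarith
    have hs : 1 / (1 + r) + r / (1 + r) = 1 := by field_simp
    refine hF.left_mem_of_mem_openSegment hp hu (hc hv hw (by positivity) (by positivity) hs)
      ⟨1 / (1 + r), r / (1 + r), by positivity, by positivity, hs, ?_⟩
    rw [sub_eq_iff_eq_add.1 he]
    have e : r / (1 + r) = (1 / (1 + r)) * r := by ring
    rw [e]
    module

/-- Translates of the cones of two faces coincide only if the faces and the cones do. -/
lemma face_eq_of_translate (hfin : A.Finite) {F₁ F₂ : Set (Fin d → ℝ)}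
    (h₁ : IsProperFace (convexHull ℝ (coeR '' A)) F₁)
    (h₂ : IsProperFace (convexHull ℝ (coeR '' A)) F₂) {x : Fin d → ℝ}
    (h : ∀ z, z ∈ hullCone (diffMonoid A (ExtZ F₁)) ↔
      z - x ∈ hullCone (diffMonoid A (ExtZ F₂))) : F₁ = F₂ := by
  set C₁ := hullCone (diffMonoid A (ExtZ F₁))
  set C₂ := hullCone (diffMonoid A (ExtZ F₂))
  have hx1 : x ∈ C₁ := (h x).2 (by rw [sub_self]; exact hullCone_zero)
  have hx2 : x ∈ C₂ := by
    have := (h (x + x)).1 (hullCone_add hx1 hx1)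
    rwa [add_sub_cancel_right] at this
  have hnx2 : -x ∈ C₂ := by
    have := (h 0).1 hullCone_zero
    rwa [zero_sub] at this
  have h12 : ∀ z, z ∈ C₁ ↔ z ∈ C₂ := by
    intro z
    constructor
    · intro hz
      have := hullCone_add ((h z).1 hz) hx2
      rwa [sub_add_cancel] at this
    · intro hz
      refine (h z).2 ?_
      rw [sub_eq_add_neg]
      exact hullCone_add hz hnx2
  obtain ⟨⟨p₁, hp₁⟩, -, hc₁, he₁⟩ := h₁
  obtain ⟨⟨p₂, hp₂⟩, -, hc₂, he₂⟩ := h₂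
  apply Set.Subset.antisymm
  · intro p hp
    refine mem_face_of_sub_mem ⟨p₂, hp₂⟩ hc₂ he₂ hp₂ (he₁.subset hp) ((h12 _).1 ?_)
    refine sub_mem_hullCone (he₂.subset hp₂) ?_
    rwa [← face_eq_hull_ext hfin hc₁ he₁]
  · intro p hp
    refine mem_face_of_sub_mem ⟨p₁, hp₁⟩ hc₁ he₁ hp₁ (he₂.subset hp) ((h12 _).2 ?_)
    refine sub_mem_hullCone (he₁.subset hp₁) ?_
    rwa [← face_eq_hull_ext hfin hc₂ he₂]

lemma extZ_nonempty (hfin : A.Finite) (hF : IsProperFace (convexHull ℝ (coeR '' A)) F) :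
    (ExtZ F).Nonempty := by
  obtain ⟨hne, -, hc, he⟩ := hF
  rw [face_eq_hull_ext hfin hc he] at hne
  exact (convexHull_nonempty_iff.1 hne).of_image

lemma HF_ne_univ (hfin : A.Finite) (hF : IsProperFace (convexHull ℝ (coeR '' A)) F) :
    HF A F ≠ univ := by
  intro h
  obtain ⟨v, hv⟩ := extZ_nonempty hfin hF
  obtain ⟨hne, hP, hc, he⟩ := hF
  refine hP (Set.Subset.antisymm he.subset (convexHull_min ?_ hc))
  rintro _ ⟨a, ha, rfl⟩
  refine mem_face_of_sub_mem hne hc he hv.1 (subset_convexHull ℝ _ ⟨a, ha, rfl⟩) ?_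
  rw [← coeR_sub]
  refine coeR_mem_hullCone ?_
  have : v - a ∈ HF A F := by rw [h]; trivial
  exact this

end Faces

/-! ### Limits of balls -/

section Balls

variable {V : Type*} [AddCommGroup V]

lemma sum_nsmul_mem {ι : Type*} {T : Set V} (s : Finset ι) (c : ι → ℕ) (f : ι → V)
    (h : ∀ i ∈ s, c i ≠ 0 → f i ∈ T) : ∑ i ∈ s, c i • f i ∈ (∑ i ∈ s, c i) • T := by
  classical
  have hone : ∀ (n : ℕ) (x : V), (n ≠ 0 → x ∈ T) → n • x ∈ n • T := by
    intro n x hx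
    rcases Nat.eq_zero_or_pos n with rfl | hn
    · simp [Set.mem_zero]
    · exact Set.nsmul_mem_nsmul (hx hn.ne')
  induction s using Finset.induction_on with
  | empty => simp
  | insert a s ha ih =>
    rw [Finset.sum_insert ha, Finset.sum_insert ha, add_nsmul]
    exact Set.add_mem_add (hone _ _ (h a (Finset.mem_insert_self a s)))
      (ih fun i hi => h i (Finset.mem_insert_of_mem hi))

lemma exists_weights [DecidableEq V] {T : Set V} {B : Finset V} (hTB : T ⊆ B) (n : ℕ) :
    ∀ x ∈ n • T, ∃ c : V → ℕ, (∀ a, c a ≠ 0 → a ∈ T) ∧ ∑ a ∈ B, c a = n ∧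
      ∑ a ∈ B, c a • a = x := by
  induction n with
  | zero =>
    intro x hx
    rw [zero_nsmul] at hx
    exact ⟨fun _ => 0, by simp, by simp, by simpa using (Set.mem_zero.1 hx).symm⟩
  | succ n ih =>
    intro x hx
    rw [succ_nsmul] at hx
    obtain ⟨y, hy, b, hb, rfl⟩ := hx
    obtain ⟨c, hcT, hcn, hcy⟩ := ih y hy
    refine ⟨fun a => c a + if a = b then 1 else 0, ?_, ?_, ?_⟩
    · intro a ha
      by_cases hab : a = b
      · rwa [hab]
      · exact hcT a (by simpa [hab] using ha)
    · rw [Finset.sum_add_distrib, hcn, Finset.sum_ite_eq' B b, if_pos (Finset.mem_coe.1 (hTB hb))]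
    · simp_rw [add_nsmul, ite_smul, one_nsmul, zero_nsmul]
      rw [Finset.sum_add_distrib, hcy, Finset.sum_ite_eq' B b, if_pos (Finset.mem_coe.1 (hTB hb))]

end Balls

section Limits

variable {d : ℕ} {A : Set (Fin d → ℤ)}

lemma sub_mem_of_mem_nsmul {S : Set (Fin d → ℤ)} (n : ℕ) :
    ∀ y ∈ n • A, ∀ z ∈ n • S, y - z ∈ diffMonoid A S := by
  induction n with
  | zero =>
    intro y hy z hz
    rw [zero_nsmul] at hy hz
    rw [Set.mem_zero.1 hy, Set.mem_zero.1 hz, sub_zero]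
    exact zero_mem _
  | succ n ih =>
    intro y hy z hz
    rw [succ_nsmul] at hy hz
    obtain ⟨y, hy, a, ha, rfl⟩ := hy
    obtain ⟨z, hz, b, hb, rfl⟩ := hz
    have := add_mem (ih y hy z hz) (sub_mem_diffMonoid ha hb)
    change y + a - (z + b) ∈ _
    rwa [add_sub_add_comm]

lemma exists_of_mem_diffMonoid {S : Set (Fin d → ℤ)} {m : Fin d → ℤ} (hm : m ∈ diffMonoid A S) :
    ∃ n : ℕ, ∃ y ∈ n • A, ∃ z ∈ n • S, m = y - z := by
  induction hm using AddSubmonoid.closure_induction with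
  | mem x hx =>
    obtain ⟨u, hu, v, hv, rfl⟩ := hx
    exact ⟨1, u, by rwa [one_nsmul], v, by rwa [one_nsmul], rfl⟩
  | zero => exact ⟨0, 0, by simp, 0, by simp, by simp⟩
  | add x x' _ _ hx hx' =>
    obtain ⟨n, y, hy, z, hz, rfl⟩ := hx
    obtain ⟨n', y', hy', z', hz', rfl⟩ := hx'
    refine ⟨n + n', y + y', ?_, z + z', ?_, ?_⟩
    · rw [add_nsmul]; exact Set.add_mem_add hy hy'
    · rw [add_nsmul]; exact Set.add_mem_add hz hz'
    · abel

/-- `diffMonoid A S` is the increasing limit of the balls `∑ a ∈ S, i (A - a)`. -/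
lemma diffMonoid_limit (hfin : A.Finite) {S : Set (Fin d → ℤ)} (hSA : S ⊆ A) (hS : S.Nonempty) :
    ∃ (g : ℕ → (Fin d → ℤ)) (n : ℕ → ℕ), Tendsto n atTop atTop ∧
      ConvergesTo (fun i => (g i + ·) '' (n i • A)) (diffMonoid A S : Set (Fin d → ℤ)) := by
  classical
  have hSfin := hfin.subset hSA
  set T := hSfin.toFinset with hT
  have hTS : ∀ a, a ∈ T ↔ a ∈ S := fun a => hSfin.mem_toFinset
  have hTne : T.Nonempty := by simpa [hT] using hS
  refine ⟨fun i => -∑ a ∈ T, i • a, fun i => ∑ a ∈ T, i, ?_, ?_⟩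
  · simp only [Finset.sum_const, smul_eq_mul]
    exact tendsto_id.const_mul_atTop' hTne.card_pos
  · intro x
    by_cases hx : x ∈ diffMonoid A S
    · obtain ⟨n, y, hy, z, hz, rfl⟩ := exists_of_mem_diffMonoid hx
      obtain ⟨b, hbS, hbn, hbz⟩ := exists_weights (B := T) (fun a ha => (hTS a).2 ha) n z hz
      filter_upwards [eventually_ge_atTop n] with i hi
      refine iff_of_true ?_ hx
      have hb : ∀ a ∈ T, b a ≤ i := fun a ha =>
        ((Finset.single_le_sum (fun _ _ => Nat.zero_le _) ha).trans hbn.le).trans hi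
      refine ⟨y + ∑ a ∈ T, (i - b a) • a, ?_, ?_⟩
      · have hcount : ∑ a ∈ T, i = n + ∑ a ∈ T, (i - b a) := by
          rw [← hbn, ← Finset.sum_add_distrib]
          exact Finset.sum_congr rfl fun a ha => (Nat.add_sub_cancel' (hb a ha)).symm
        change _ ∈ (∑ a ∈ T, i) • A
        rw [hcount, add_nsmul]
        exact Set.add_mem_add hy (sum_nsmul_mem T _ _ fun a ha _ => hSA ((hTS a).1 ha))
      · have hz' : ∑ a ∈ T, i • a = z + ∑ a ∈ T, (i - b a) • a := by
          rw [← hbz, ← Finset.sum_add_distrib]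
          refine Finset.sum_congr rfl fun a ha => ?_
          rw [← add_nsmul, Nat.add_sub_cancel' (hb a ha)]
        change -∑ a ∈ T, i • a + (y + ∑ a ∈ T, (i - b a) • a) = y - z
        rw [hz']; abel
    · refine Eventually.of_forall fun i => iff_of_false ?_ hx
      rintro ⟨y, hy, rfl⟩
      apply hx
      have := sub_mem_of_mem_nsmul (A := A) (S := S) _ y hy (∑ a ∈ T, i • a)
        (sum_nsmul_mem T _ _ fun a ha _ => (hTS a).1 ha)
      rwa [sub_eq_neg_add] at this

/-- Every horoball is a translate of some `diffMonoid A S`: with `h₀` a point of the horoball,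
write the centre of the `i`-th ball as `h₀ - ∑ a, c i a • a`; along a subsequence every coefficient
is monotone (Dickson), and `S` collects those `a` whose coefficient tends to infinity. -/
lemma horoball_eq_translate (hfin : A.Finite) {H : Set (Fin d → ℤ)} (hH : IsHoroballZ A H) :
    ∃ S ⊆ A, S.Nonempty ∧ ∃ v : Fin d → ℤ, ∀ x, x ∈ H ↔ x - v ∈ diffMonoid A S := by
  classical
  obtain ⟨⟨h₀, hh₀⟩, -, g, n, hn, hconv⟩ := hH
  set B := hfin.toFinset with hB
  have hBA : ∀ a, a ∈ B ↔ a ∈ A := fun a => hfin.mem_toFinset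
  -- a tail of the sequence of balls contains `h₀`
  obtain ⟨i₀, hi₀⟩ := eventually_atTop.1 (hconv h₀)
  have hrep : ∀ i, ∃ c : (Fin d → ℤ) → ℕ, ∑ a ∈ B, c a = n (i₀ + i) ∧
      g (i₀ + i) + ∑ a ∈ B, c a • a = h₀ := by
    intro i
    obtain ⟨y, hy, hyh⟩ := (hi₀ (i₀ + i) (Nat.le_add_right _ _)).2 hh₀
    obtain ⟨c, -, hcn, hcy⟩ := exists_weights (B := B) (fun a ha => (hBA a).2 ha) _ y hy
    exact ⟨c, hcn, by rw [hcy]; exact hyh⟩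
  choose c hcn hcg using hrep
  obtain ⟨φ, hφ⟩ := WellQuasiOrdered.exists_monotone_subseq
    (wellQuasiOrdered_le (α := B → ℕ)) (fun i a => c i a)
  set ψ : ℕ → ℕ := fun i => i₀ + φ i with hψ
  have hψt : Tendsto ψ atTop atTop :=
    tendsto_atTop_mono (fun i => Nat.le_add_left _ _) φ.strictMono.tendsto_atTop
  set e : ℕ → (Fin d → ℤ) → ℕ := fun i => c (φ i) with he
  have hen : ∀ i, ∑ a ∈ B, e i a = n (ψ i) := fun i => hcn (φ i)
  have heg : ∀ i, g (ψ i) = h₀ - ∑ a ∈ B, e i a • a := fun i => eq_sub_of_add_eq (hcg (φ i))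
  have hmono : ∀ a ∈ B, Monotone fun i => e i a := fun a ha i j hij => hφ i j hij ⟨a, ha⟩
  have hconv' : ∀ x, ∀ᶠ i in atTop, (x ∈ (g (ψ i) + ·) '' (n (ψ i) • A) ↔ x ∈ H) :=
    fun x => hψt.eventually (hconv x)
  set T := B.filter fun a => Tendsto (fun i => e i a) atTop atTop with hT
  set U := B.filter fun a => ¬ Tendsto (fun i => e i a) atTop atTop with hU
  have hsplit : ∀ {M : Type} [AddCommMonoid M] (f : (Fin d → ℤ) → M),
      ∑ a ∈ T, f a + ∑ a ∈ U, f a = ∑ a ∈ B, f a := fun f =>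
    Finset.sum_filter_add_sum_filter_not B _ f
  have hconst : ∃ k : (Fin d → ℤ) → ℕ, ∀ᶠ i in atTop, ∀ a ∈ U, e i a = k a := by
    have : ∀ a, ∃ k, a ∈ U → ∀ᶠ i in atTop, e i a = k := by
      intro a
      by_cases ha : a ∈ U
      · obtain ⟨haB, hat⟩ := Finset.mem_filter.1 ha
        obtain ⟨l, hl⟩ := (tendsto_atTop_of_monotone (hmono a haB)).resolve_left hat
        rw [nhds_discrete, tendsto_pure] at hl
        exact ⟨l, fun _ => hl⟩
      · exact ⟨0, fun h => absurd h ha⟩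
    choose k hk using this
    exact ⟨k, (Filter.eventually_all_finset U).2 hk⟩
  obtain ⟨k, hk⟩ := hconst
  have hTne : T.Nonempty := by
    by_contra hne
    rw [Finset.not_nonempty_iff_eq_empty] at hne
    have h1 : ∀ᶠ i in atTop, n (ψ i) = ∑ a ∈ U, k a := by
      filter_upwards [hk] with i hi
      rw [← hen, ← hsplit, hne, Finset.sum_empty, zero_add]
      exact Finset.sum_congr rfl hi
    have h2 := (hn.comp hψt).eventually (eventually_gt_atTop (∑ a ∈ U, k a))
    obtain ⟨i, hi1, hi2⟩ := (h1.and h2).exists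
    exact absurd hi1 hi2.ne'
  obtain ⟨w, hw⟩ := hTne
  have hTA : ∀ a ∈ T, a ∈ A := fun a ha => (hBA a).1 (Finset.mem_filter.1 ha).1
  set K := ∑ a ∈ U, k a with hK
  refine ⟨T, hTA, ⟨w, hw⟩, h₀ + (K • w - ∑ a ∈ U, k a • a), fun x => ⟨fun hx => ?_, fun hx => ?_⟩⟩
  · obtain ⟨i, hi, hik⟩ := ((hconv' x).and hk).exists
    obtain ⟨y, hy, rfl⟩ := hi.2 hx
    have hUk : ∑ a ∈ U, e i a • a = ∑ a ∈ U, k a • a :=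
      Finset.sum_congr rfl fun a ha => by rw [hik a ha]
    have hUk' : ∑ a ∈ U, e i a = K := Finset.sum_congr rfl hik
    have hz : ∑ a ∈ T, e i a • a + K • w ∈ n (ψ i) • (T : Set (Fin d → ℤ)) := by
      rw [← hen, ← hsplit, hUk', add_nsmul]
      exact Set.add_mem_add (sum_nsmul_mem T _ _ fun a ha _ => ha) (Set.nsmul_mem_nsmul hw)
    have := sub_mem_of_mem_nsmul _ y hy _ hz
    convert this using 1
    simp only [heg, ← hsplit, hUk]
    abel
  · obtain ⟨N, y, hy, z, hz, hxyz⟩ := exists_of_mem_diffMonoid hx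
    obtain ⟨b, -, hbn, hbz⟩ := exists_weights (B := T) (fun a ha => ha) N z hz
    have hlarge : ∀ᶠ i in atTop, ∀ a ∈ T, b a ≤ e i a :=
      (Filter.eventually_all_finset T).2 fun a ha =>
        (Finset.mem_filter.1 ha).2.eventually (eventually_ge_atTop (b a))
    obtain ⟨i, ⟨hi, hik⟩, hib⟩ := (((hconv' x).and hk).and hlarge).exists
    refine hi.1 ⟨K • w + y + ∑ a ∈ T, (e i a - b a) • a, ?_, ?_⟩
    · have hcount : n (ψ i) = K + N + ∑ a ∈ T, (e i a - b a) := by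
        have hUk' : ∑ a ∈ U, e i a = K := Finset.sum_congr rfl hik
        have : ∑ a ∈ T, e i a = N + ∑ a ∈ T, (e i a - b a) := by
          rw [← hbn, ← Finset.sum_add_distrib]
          exact Finset.sum_congr rfl fun a ha => (Nat.add_sub_cancel' (hib a ha)).symm
        rw [← hen, ← hsplit, hUk', this]; ring
      rw [hcount, add_nsmul, add_nsmul]
      exact Set.add_mem_add (Set.add_mem_add (Set.nsmul_mem_nsmul (hTA w hw)) hy)
        (sum_nsmul_mem T _ _ fun a ha _ => hTA a ha)
    · have hUk : ∑ a ∈ U, e i a • a = ∑ a ∈ U, k a • a :=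
        Finset.sum_congr rfl fun a ha => by rw [hik a ha]
      have hTz : ∑ a ∈ T, e i a • a = z + ∑ a ∈ T, (e i a - b a) • a := by
        rw [← hbz, ← Finset.sum_add_distrib]
        refine Finset.sum_congr rfl fun a ha => ?_
        rw [← add_nsmul, Nat.add_sub_cancel' (hib a ha)]
      change g (ψ i) + (K • w + y + ∑ a ∈ T, (e i a - b a) • a) = x
      rw [sub_eq_iff_eq_add.1 hxyz, heg, ← hsplit, hUk, hTz]
      abel

end Limits

/-! ### The envelope of a face -/

/-- A functional that is nonnegative on a finite spanning set `G` and negative at `x` can be chosen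
so that its zeros in `G` span its kernel: take one with a maximal set of zeros in `G`. If these do
not span the kernel, tilt it along a functional vanishing at `x` and at all of its zeros, until a
further element of `G` becomes a zero. -/
lemma exists_facet_functional {V : Type*} [AddCommGroup V] [Module ℝ V]
    {G : Set V} (hG : G.Finite) (hspan : Submodule.span ℝ G = ⊤) {x : V}
    (hex : ∃ l : V →ₗ[ℝ] ℝ, (∀ g ∈ G, 0 ≤ l g) ∧ l x < 0) :
    ∃ l : V →ₗ[ℝ] ℝ, (∀ g ∈ G, 0 ≤ l g) ∧ l x < 0 ∧
      LinearMap.ker l ≤ Submodule.span ℝ {g ∈ G | l g = 0} := by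
  classical
  let 𝒵 : Set (Set V) := {Z | ∃ l : V →ₗ[ℝ] ℝ, (∀ g ∈ G, 0 ≤ l g) ∧ l x < 0 ∧
    Z = {g ∈ G | l g = 0}}
  have h𝒵fin : 𝒵.Finite := hG.finite_subsets.subset (by
    rintro _ ⟨l, -, -, rfl⟩
    exact fun g hg => hg.1)
  have h𝒵ne : 𝒵.Nonempty := by
    obtain ⟨l, h1, h2⟩ := hex
    exact ⟨_, l, h1, h2, rfl⟩
  obtain ⟨_, ⟨l, hl, hlx, rfl⟩, hmax⟩ := h𝒵fin.exists_maximal h𝒵ne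
  refine ⟨l, hl, hlx, fun y hy => ?_⟩
  by_contra hyZ
  obtain ⟨m, hmy, hmZ⟩ := Submodule.exists_le_ker_of_notMem hyZ
  have hmZ' : ∀ g ∈ G, l g = 0 → m g = 0 := fun g hg hlg =>
    hmZ (Submodule.subset_span ⟨hg, hlg⟩)
  obtain ⟨m', hm'x, hm'y, hm'Z⟩ : ∃ m' : V →ₗ[ℝ] ℝ, m' x = 0 ∧ m' y ≠ 0 ∧
      ∀ g ∈ G, l g = 0 → m' g = 0 := by
    refine ⟨m - (m x / l x) • l, ?_, ?_, ?_⟩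
    · simp [div_mul_cancel₀ _ hlx.ne]
    · have : l y = 0 := hy
      simpa [this] using hmy
    · intro g hg h
      simp [h, hmZ' g hg h]
  obtain ⟨g₀, hg₀, hne⟩ : ∃ g ∈ G, m' g ≠ 0 := by
    by_contra! h
    have : Submodule.span ℝ G ≤ LinearMap.ker m' := Submodule.span_le.2 h
    rw [hspan] at this
    exact hm'y (this (Submodule.mem_top : y ∈ ⊤))
  obtain ⟨q, hqx, hqZ, hqg⟩ : ∃ q : V →ₗ[ℝ] ℝ, q x = 0 ∧ (∀ g ∈ G, l g = 0 → q g = 0) ∧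
      q g₀ < 0 := by
    rcases lt_or_gt_of_ne hne with h | h
    · exact ⟨m', hm'x, hm'Z, h⟩
    · exact ⟨-m', by simp [hm'x], fun g hg hl0 => by simp [hm'Z g hg hl0], by simpa using h⟩
  obtain ⟨g₁, ⟨hg₁, hqg₁⟩, hmin⟩ := Set.exists_min_image {g ∈ G | q g < 0}
    (fun g => l g / (-q g)) (hG.subset fun _ h => h.1) ⟨g₀, hg₀, hqg⟩
  set t := l g₁ / (-q g₁) with ht
  have ht0 : 0 ≤ t := div_nonneg (hl g₁ hg₁) (by linarith)
  have hpos : ∀ g ∈ G, 0 ≤ (l + t • q) g := by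
    intro g hg
    simp only [LinearMap.add_apply, LinearMap.smul_apply, smul_eq_mul]
    rcases le_or_gt 0 (q g) with h | h
    · exact add_nonneg (hl g hg) (mul_nonneg ht0 h)
    · have := (le_div_iff₀ (by linarith : 0 < -q g)).1 (hmin g ⟨hg, h⟩)
      linarith
  have hZ : {g ∈ G | l g = 0} ⊆ {g ∈ G | (l + t • q) g = 0} := by
    rintro g ⟨hg, hlg⟩
    exact ⟨hg, by simp [hlg, hqZ g hg hlg]⟩
  have hg₁Z : g₁ ∈ {g ∈ G | (l + t • q) g = 0} := by
    refine ⟨hg₁, ?_⟩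
    simp only [LinearMap.add_apply, LinearMap.smul_apply, smul_eq_mul, ht]
    field_simp [hqg₁.ne]
    ring
  have h2 := hmax ⟨l + t • q, hpos, by simpa [hqx] using hlx, rfl⟩ hZ hg₁Z
  exact absurd (hqZ g₁ hg₁ h2.2) hqg₁.ne

section Envelope

variable {d : ℕ} {A : Set (Fin d → ℤ)} {F : Set (Fin d → ℝ)}

lemma dotp_smul (l : Fin d → ℝ) (t : ℝ) (x : Fin d → ℝ) : dotp l (t • x) = t * dotp l x :=
  dotProduct_smul t l x

lemma span_coeR_top (hgen : PosGenZ A) : Submodule.span ℝ (coeR '' A) = ⊤ := by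
  have hn : ∀ n : ℕ, ∀ x ∈ n • A, coeR x ∈ Submodule.span ℝ (coeR '' A) := by
    intro n
    induction n with
    | zero =>
      intro x hx
      rw [zero_nsmul] at hx
      rw [Set.mem_zero.1 hx, coeR_zero]
      exact zero_mem _
    | succ n ih =>
      intro x hx
      rw [succ_nsmul] at hx
      obtain ⟨y, hy, a, ha, rfl⟩ := hx
      change coeR (y + a) ∈ _
      rw [coeR_add]
      exact add_mem (ih y hy) (Submodule.subset_span ⟨a, ha, rfl⟩)
  rw [eq_top_iff, ← (Pi.basisFun ℝ (Fin d)).span_eq, Submodule.span_le]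
  rintro _ ⟨i, rfl⟩
  obtain ⟨n, -, h⟩ := hgen (Pi.single i 1)
  have heq : (Pi.basisFun ℝ (Fin d)) i = coeR (Pi.single i 1) := by
    ext j
    by_cases hij : j = i
    · subst hij; simp [coeR]
    · simp [coeR, hij]
  rw [SetLike.mem_coe, heq]
  exact hn n _ h

/-- `conv(H_F) = Env_F`. Facet inequalities hold on the cone because it consists of nonnegative
multiples of vectors from `F` into the polytope. Conversely, a point outside the cone is separated
from it by some `l` whose zeros among the generators span `ker l`, and then `l` is the inward
normal of a facet containing `F`. -/
lemma hullCone_eq_env (hfin : A.Finite) (h0 : (0 : Fin d → ℤ) ∈ A) (hgen : PosGenZ A)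
    (hF : IsProperFace (convexHull ℝ (coeR '' A)) F) :
    hullCone (diffMonoid A (ExtZ F)) = EnvF (convexHull ℝ (coeR '' A)) F := by
  classical
  set P := convexHull ℝ (coeR '' A) with hPdef
  obtain ⟨v, hv⟩ := extZ_nonempty hfin hF
  obtain ⟨hne, hFP, hc, he⟩ := hF
  apply Set.Subset.antisymm
  · intro z hz F' _ hFF' l _ _ hl
    obtain ⟨r, hr, u, hu, w, hw, rfl⟩ := exists_of_mem_hullCone hne hc he hz
    rw [dotp_smul]
    exact mul_nonneg hr (hl u hu w (hFF' hw))
  · intro x hx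
    by_contra hxC
    set G : Set (Fin d → ℝ) := Set.image2 (fun u v => coeR (u - v)) A (ExtZ F) with hGdef
    have hEfin : (ExtZ F).Finite := hfin.subset fun a ha => (extZ_subset hc he ha).1
    have hG : G.Finite := Set.Finite.image2 _ hfin hEfin
    have hGspan : Submodule.span ℝ G = ⊤ := by
      rw [eq_top_iff, ← span_coeR_top hgen, Submodule.span_le]
      rintro _ ⟨a, ha, rfl⟩
      have h1 : coeR (a - v) ∈ Submodule.span ℝ G := Submodule.subset_span ⟨a, ha, v, hv, rfl⟩
      have h2 : coeR (0 - v) ∈ Submodule.span ℝ G := Submodule.subset_span ⟨0, h0, v, hv, rfl⟩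
      have h3 := sub_mem h1 h2
      rwa [← coeR_sub, sub_sub_sub_cancel_right, sub_zero] at h3
    have hex : ∃ l : (Fin d → ℝ) →ₗ[ℝ] ℝ, (∀ g ∈ G, 0 ≤ l g) ∧ l x < 0 := by
      rcases farkas (K := ℝ) hG.toFinset id x with ⟨c, hc, hx'⟩ | ⟨l, hl, hlx⟩
      · exfalso
        apply hxC
        rw [hx']
        refine hullCone_sum _ fun g hg => hullCone_smul ?_ (hc g)
        obtain ⟨u, hu, w, hw, rfl⟩ := hG.mem_toFinset.1 hg
        exact coeR_mem_hullCone (sub_mem_diffMonoid hu hw)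
      · exact ⟨l, fun g hg => hl g (hG.mem_toFinset.2 hg), hlx⟩
    obtain ⟨l, hl, hlx, hker⟩ := exists_facet_functional hG hGspan hex
    have hl0 : l ≠ 0 := by rintro rfl; simp at hlx
    set y : Fin d → ℝ := fun j => l (fun k => if j = k then 1 else 0) with hy
    have hly : ∀ z, dotp y z = l z := by
      intro z
      rw [LinearMap.pi_apply_eq_sum_univ l z]
      exact Finset.sum_congr rfl fun j _ => mul_comm _ _
    have hge : ∀ w ∈ ExtZ F, ∀ p ∈ P, l (coeR w) ≤ l p := by
      intro w hw p hp
      have hcv : Convex ℝ {p | l (coeR w) ≤ l p} := convex_halfSpace_ge l.isLinear _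
      refine convexHull_min ?_ hcv hp
      rintro _ ⟨u, hu, rfl⟩
      have := hl _ ⟨u, hu, w, hw, rfl⟩
      simp only [coeR_sub, map_sub] at this
      exact sub_nonneg.1 this
    have hvP : coeR v ∈ P := he.subset hv.1
    set F' : Set (Fin d → ℝ) := {p ∈ P | l p = l (coeR v)} with hF'
    have hEF' : ∀ w ∈ ExtZ F, coeR w ∈ F' := fun w hw =>
      ⟨he.subset hw.1, le_antisymm (hge w hw _ hvP) (hge v hv _ (he.subset hw.1))⟩
    have hF'c : Convex ℝ F' :=
      (convex_convexHull ℝ _).inter (convex_hyperplane l.isLinear _)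
    have hFF' : F ⊆ F' := by
      rw [face_eq_hull_ext hfin hc he]
      refine convexHull_min ?_ hF'c
      rintro _ ⟨w, hw, rfl⟩
      exact hEF' w hw
    have hF'e : IsExtreme ℝ P F' := by
      refine ⟨fun _ h => h.1, ?_⟩
      rintro p hp q hq _ ⟨-, h⟩ ⟨α, β, hα, hβ, hαβ, rfl⟩
      refine ⟨hp, le_antisymm ?_ (hge v hv p hp)⟩
      simp only [map_add, map_smul, smul_eq_mul] at h
      have h1 := mul_le_mul_of_nonneg_left (hge v hv q hq) hβ.le
      have h2 : α * l p ≤ α * l (coeR v) := by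
        have h3 : α * l (coeR v) + β * l (coeR v) = l (coeR v) := by
          rw [← add_mul, hαβ, one_mul]
        linarith
      exact le_of_mul_le_mul_left h2 hα
    have hF'P : F' ≠ P := by
      intro h
      apply hl0
      have : Submodule.span ℝ G ≤ LinearMap.ker l := by
        refine Submodule.span_le.2 ?_
        rintro _ ⟨u, hu, w, hw, rfl⟩
        have h1 : coeR u ∈ F' := by rw [h]; exact subset_convexHull ℝ _ ⟨u, hu, rfl⟩
        change l (coeR (u - w)) = 0
        rw [coeR_sub, map_sub, h1.2, (hEF' w hw).2, sub_self]
      rw [hGspan, top_le_iff] at this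
      exact LinearMap.ker_eq_top.1 this
    have hvs : vectorSpan ℝ F' = LinearMap.ker l := by
      apply le_antisymm
      · refine Submodule.span_le.2 ?_
        rintro _ ⟨p, hp, q, hq, rfl⟩
        change l (p - q) = 0
        rw [map_sub, hp.2, hq.2, sub_self]
      · refine hker.trans (Submodule.span_mono ?_)
        rintro _ ⟨⟨u, hu, w, hw, rfl⟩, h⟩
        have hw' := hEF' w hw
        refine ⟨coeR u, ⟨subset_convexHull ℝ _ ⟨u, hu, rfl⟩, ?_⟩, coeR w, hw', ?_⟩
        · simp only [coeR_sub, map_sub] at h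
          rw [sub_eq_zero.1 h, hw'.2]
        · exact (coeR_sub u w).symm
    have hrank : Module.finrank ℝ (vectorSpan ℝ F') = d - 1 := by
      have h1 := Module.Dual.finrank_ker_add_one_of_ne_zero (f := l) hl0
      rw [Module.finrank_fin_fun] at h1
      rw [hvs]
      exact Nat.eq_sub_of_add_eq h1
    have hy0 : y ≠ 0 := by
      intro h
      have h1 := hly x
      rw [h] at h1
      have h2 : dotp (0 : Fin d → ℝ) x = 0 := by simp [dotp]
      rw [← h1, h2] at hlx
      exact lt_irrefl _ hlx
    have := hx F' ⟨⟨⟨_, hEF' v hv⟩, hF'P, hF'c, hF'e⟩, hrank⟩ hFF' y hy0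
      (fun p hp q hq => by rw [hly, map_sub, hp.2, hq.2, sub_self])
      (fun p hp q hq => by rw [hly, map_sub, hq.2]; exact sub_nonneg.2 (hge v hv p hp))
    rw [hly] at this
    exact absurd hlx (not_lt.2 this)

end Envelope

/-! ### The correspondence between horoballs and faces -/

lemma convexHull_translate_mem {d : ℕ} {H : Set (Fin d → ℤ)} {M : AddSubmonoid (Fin d → ℤ)}
    {v : Fin d → ℤ} (h : ∀ x, x ∈ H ↔ x - v ∈ M) (z : Fin d → ℝ) :
    z ∈ convexHull ℝ (coeR '' H) ↔ z - coeR v ∈ hullCone M := by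
  have h1 : coeR '' H = coeR v +ᵥ (coeR '' (M : Set (Fin d → ℤ))) := by
    ext p
    constructor
    · rintro ⟨x, hx, rfl⟩
      refine ⟨_, ⟨x - v, (h x).1 hx, rfl⟩, ?_⟩
      change coeR v + coeR (x - v) = coeR x
      rw [← coeR_add, add_sub_cancel]
    · rintro ⟨_, ⟨m, hm, rfl⟩, rfl⟩
      exact ⟨v + m, (h _).2 (by rwa [add_sub_cancel_left]), coeR_add v m⟩
  rw [h1, convexHull_vadd, Set.mem_vadd_set_iff_neg_vadd_mem, vadd_eq_add, neg_add_eq_sub]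
  rfl

lemma mem_translate_iff {d : ℕ} {M : Set (Fin d → ℤ)} {v x : Fin d → ℤ} :
    x ∈ (v + ·) '' M ↔ x - v ∈ M := by
  constructor
  · rintro ⟨m, hm, rfl⟩
    change v + m - v ∈ M
    rwa [add_sub_cancel_left]
  · intro h
    exact ⟨x - v, h, add_sub_cancel v x⟩

lemma horoball_eq_face {d : ℕ} {A : Set (Fin d → ℤ)} (hfin : A.Finite)
    (h0 : (0 : Fin d → ℤ) ∈ A) (hgen : PosGenZ A) {H : Set (Fin d → ℤ)} (hH : IsHoroballZ A H) :
    ∃ F, IsProperFace (convexHull ℝ (coeR '' A)) F ∧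
      ∃ v : Fin d → ℤ, ∀ x, x ∈ H ↔ x - v ∈ HF A F := by
  obtain ⟨S, hSA, hS, v, hv⟩ := horoball_eq_translate hfin hH
  rcases diffMonoid_eq_univ_or_face hfin h0 hgen hSA hS with h | ⟨F, hF, hSF⟩
  · refine absurd (Set.eq_univ_of_forall fun x => (hv x).2 ?_) hH.2.1
    rw [← SetLike.mem_coe, h]
    trivial
  · exact ⟨F, hF, v, fun x => by rw [hv, ← hSF]; rfl⟩

/-- Horoballs in `ℤ^d` correspond to faces of `conv(A)`: for every face `F`
of `conv(A)`, `H_F` is the unique `A`-horoball containing `0` whose convex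
hull is `Env_F`; conversely, every `A`-horoball is a translate `v + H_F` for a
uniquely determined face `F` of `conv(A)`. -/
theorem horoballs_are_faces_of_convexHull {d : ℕ}
    (A : Set (Fin d → ℤ)) (hfin : A.Finite) (h0 : (0 : Fin d → ℤ) ∈ A)
    (hgen : PosGenZ A) :
    (∀ F : Set (Fin d → ℝ), IsProperFace (convexHull ℝ (coeR '' A)) F →
      (IsHoroballZ A (HF A F) ∧ (0 : Fin d → ℤ) ∈ HF A F ∧
          convexHull ℝ (coeR '' HF A F) = EnvF (convexHull ℝ (coeR '' A)) F) ∧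
        ∀ H : Set (Fin d → ℤ), IsHoroballZ A H → (0 : Fin d → ℤ) ∈ H →
          convexHull ℝ (coeR '' H) = EnvF (convexHull ℝ (coeR '' A)) F →
            H = HF A F) ∧
      ∀ H : Set (Fin d → ℤ), IsHoroballZ A H →
        ∃! F : Set (Fin d → ℝ),
          IsProperFace (convexHull ℝ (coeR '' A)) F ∧
            ∃ v : Fin d → ℤ, H = (v + ·) '' HF A F := by
  refine ⟨fun F hF => ⟨⟨⟨⟨0, zero_mem (diffMonoid A (ExtZ F))⟩, HF_ne_univ hfin hF, ?_⟩,
    zero_mem (diffMonoid A (ExtZ F)), hullCone_eq_env hfin h0 hgen hF⟩, ?_⟩, ?_⟩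
  · exact diffMonoid_limit hfin (fun a ha => (extZ_subset hF.2.2.1 hF.2.2.2 ha).1)
      (extZ_nonempty hfin hF)
  · intro H hH h0H hconv
    obtain ⟨F₂, hF₂, v, hv⟩ := horoball_eq_face hfin h0 hgen hH
    have htr := convexHull_translate_mem (M := diffMonoid A (ExtZ F₂)) hv
    rw [hconv, ← hullCone_eq_env hfin h0 hgen hF] at htr
    obtain rfl := face_eq_of_translate hfin hF hF₂ htr
    -- both `-v` and `v` belong to `H_F`, so the translation by `v` is invisible
    have hnv : -v ∈ diffMonoid A (ExtZ F) := by
      have := (hv 0).1 h0H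
      rwa [zero_sub] at this
    have hvM : v ∈ diffMonoid A (ExtZ F) :=
      mem_of_neg_mem ((htr _).2 (by rw [sub_self]; exact hullCone_zero)) hnv
    ext x
    rw [hv]
    constructor
    · intro hx
      have := add_mem (S := AddSubmonoid (Fin d → ℤ)) (s := diffMonoid A (ExtZ F)) hx hvM
      rwa [sub_add_cancel] at this
    · intro hx
      have := add_mem (S := AddSubmonoid (Fin d → ℤ)) (s := diffMonoid A (ExtZ F)) hx hnv
      rwa [← sub_eq_add_neg] at this
  · intro H hH
    obtain ⟨F, hF, v, hv⟩ := horoball_eq_face hfin h0 hgen hH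
    refine ⟨F, ⟨hF, v, Set.ext fun x => by rw [hv, mem_translate_iff]⟩, ?_⟩
    rintro F' ⟨hF', v', rfl⟩
    refine face_eq_of_translate hfin hF' hF (x := coeR v - coeR v') fun z => ?_
    have h1 := convexHull_translate_mem (M := diffMonoid A (ExtZ F)) hv (z + coeR v')
    have h2 := convexHull_translate_mem (M := diffMonoid A (ExtZ F'))
      (H := (v' + ·) '' HF A F') (v := v') (fun x => mem_translate_iff) (z + coeR v')
    rw [add_sub_cancel_right] at h2
    rw [← h2, h1, sub_sub_eq_add_sub]
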